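/- Fix n ≥ 6. Let G = A_{n−1} be the anticycle on [n−1] and let F be the star on [n] with edges {i, n} for 1 ≤ i ≤ n−3. Then the product ideal I_G^2 · I_F has linear quotients via the ordering of its minimal monomial generators given by decreasing lexicographic order induced by x_n > x_{n−1} > … > x_1. -/

import Mathlib

open MvPolynomial

noncomputable section

/-- The edge ideal of a finite simple graph on vertex set `Fin n`
(vertex with index `v` corresponds to the vertex `v+1` of `[n]`). -/
def edgeIdeal (K : Type*) [Field K] {n : ℕ} (G : SimpleGraph (Fin n)) :
    Ideal (MvPolynomial (Fin n) K) :=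
  Ideal.span {p | ∃ i j : Fin n, G.Adj i j ∧ p = X i * X j}

/-- `d` is the exponent vector of a minimal monomial generator of `I`. -/
def IsMinGen {K : Type*} [Field K] {n : ℕ} (I : Ideal (MvPolynomial (Fin n) K))
    (d : Fin n →₀ ℕ) : Prop :=
  monomial d (1 : K) ∈ I ∧
    ∀ e : Fin n →₀ ℕ, e ≤ d → e ≠ d → monomial e (1 : K) ∉ I

/-- A list of exponent vectors `L = [d_1, …, d_r]` is a linear quotient ordering if
for every `i ≥ 2` the colon ideal `(x^{d_1}, …, x^{d_{i-1}}) : x^{d_i}` is generated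
by a subset of the variables. -/
def IsLinQuotOrder (K : Type*) [Field K] {n : ℕ} (L : List (Fin n →₀ ℕ)) : Prop :=
  ∀ i : Fin L.length, 0 < i.val →
    ∃ V : Set (Fin n),
      Submodule.colon
        (Ideal.span {m : MvPolynomial (Fin n) K |
          ∃ k : Fin L.length, k.val < i.val ∧ m = monomial (L.get k) 1})
        (Ideal.span {monomial (L.get i) (1 : K)}) =
      Ideal.span ((fun v : Fin n => (X v : MvPolynomial (Fin n) K)) '' V)

/-- A monomial ideal has linear quotients if it is principal or admits a
linear quotient ordering of its minimal monomial generators. -/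
def HasLinearQuotients {K : Type*} [Field K] {n : ℕ}
    (I : Ideal (MvPolynomial (Fin n) K)) : Prop :=
  (∃ p, I = Ideal.span {p}) ∨
    ∃ L : List (Fin n →₀ ℕ), L.Nodup ∧ (∀ d, d ∈ L ↔ IsMinGen I d) ∧ IsLinQuotOrder K L

/-- `lexLt d e` : the monomial `x^d` is lexicographically smaller than `x^e`
for the lexicographic order induced by `x_n > x_{n-1} > … > x_1`. -/
def lexLt {n : ℕ} (d e : Fin n →₀ ℕ) : Prop :=
  ∃ k : Fin n, d k < e k ∧ ∀ m : Fin n, k < m → d m = e m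

/-- `L` lists the minimal monomial generators of `I` in decreasing lexicographic order. -/
def LexDecMinGenOrder {K : Type*} [Field K] {n : ℕ} (I : Ideal (MvPolynomial (Fin n) K))
    (L : List (Fin n →₀ ℕ)) : Prop :=
  List.Pairwise (fun d e => lexLt e d) L ∧ ∀ d, d ∈ L ↔ IsMinGen I d

/-- The anticycle on `[m]` : `{i,j}` is an edge iff `i ≠ j` and `i - j ≢ ±1 (mod m)`. -/
def anticycle (m : ℕ) : SimpleGraph (Fin m) where
  Adj i j := i ≠ j ∧ (i.val + 1) % m ≠ j.val ∧ (j.val + 1) % m ≠ i.val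
  symm := ⟨fun i j h => ⟨h.1.symm, h.2.2, h.2.1⟩⟩
  loopless := ⟨fun i h => h.1 rfl⟩

/-- The anticycle on `[m]` regarded as a graph on the vertex set `[n]`. -/
def anticycleIn (n m : ℕ) : SimpleGraph (Fin n) where
  Adj i j := i ≠ j ∧ i.val < m ∧ j.val < m ∧ (i.val + 1) % m ≠ j.val ∧ (j.val + 1) % m ≠ i.val
  symm := ⟨fun i j h => ⟨h.1.symm, h.2.2.1, h.2.1, h.2.2.2.2, h.2.2.2.1⟩⟩
  loopless := ⟨fun i h => h.1 rfl⟩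

/-- The star on `[n]` with edges `{i, n}` for `1 ≤ i ≤ n - 3`
(in the `0`-indexed picture: edges `{i, n-1}` for `i ≤ n - 4`). -/
def starF (n : ℕ) : SimpleGraph (Fin n) :=
  SimpleGraph.fromRel (fun i j => i.val + 4 ≤ n ∧ j.val = n - 1)

/-- `AgreeOrder n s i j t` : the degree-`s` monomials with ascending (0-indexed)
index sequences `i` and `j` agree in order `t`. -/
def AgreeOrder (n s : ℕ) (i j : ℕ → Fin n) (t : ℕ) : Prop :=
  if t = 0 then j (s - 1) < i (s - 1)
  else (∀ l, s - t ≤ l → l ≤ s - 1 → i l = j l) ∧ i (s - t - 1) ≠ j (s - t - 1)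


structure Good (n : ℕ) (d : Fin n →₀ ℕ) : Prop where
  deg : d.degree = 6
  top : ∀ a : Fin n, a.val + 1 = n → d a = 1
  two : ∀ a b : Fin n, a.val + 3 = n → b.val + 2 = n → d a + d b ≤ 2
  win : ∀ a b : Fin n, a.val + 1 = b.val → b.val + 1 < n → d a + d b ≤ 3
  wrap : ∀ a b : Fin n, a.val = 0 → b.val + 2 = n → d a + d b ≤ 3

theorem lexLt_trans' {n : ℕ} {a b c : Fin n →₀ ℕ} (h1 : lexLt a b) (h2 : lexLt b c) :
    lexLt a c := by
  obtain ⟨k, hk, hk'⟩ := h1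
  obtain ⟨l, hl, hl'⟩ := h2
  rcases lt_trichotomy k l with h | h | h
  · exact ⟨l, by rw [hk' l h]; exact hl, fun m hm => (hk' m (h.trans hm)).trans (hl' m hm)⟩
  · subst h
    exact ⟨k, hk.trans hl, fun m hm => (hk' m hm).trans (hl' m hm)⟩
  · exact ⟨k, by rw [← hl' k h]; exact hk, fun m hm => (hk' m hm).trans (hl' m (h.trans hm))⟩

theorem lexLt_irrefl' {n : ℕ} (a : Fin n →₀ ℕ) : ¬ lexLt a a := by
  rintro ⟨k, hk, -⟩
  exact lt_irrefl _ hk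

theorem lexLt_total' {n : ℕ} (a b : Fin n →₀ ℕ) (h : a ≠ b) : lexLt a b ∨ lexLt b a := by
  classical
  let s := Finset.univ.filter (fun k => a k ≠ b k)
  have hs : s.Nonempty := by
    by_contra hne
    apply h
    ext k
    by_contra hk
    exact hne ⟨k, by simp [s, hk]⟩
  have hm : s.max' hs ∈ s := s.max'_mem hs
  have hgt : ∀ m, s.max' hs < m → a m = b m := by
    intro m hm'
    by_contra hk
    have : m ∈ s := by simp [s, hk]
    exact absurd (s.le_max' m this) (not_le.mpr hm')
  have hne : a (s.max' hs) ≠ b (s.max' hs) := by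
    simpa [s] using (Finset.mem_filter.mp hm).2
  rcases lt_or_gt_of_ne hne with h1 | h1
  · exact Or.inl ⟨_, h1, hgt⟩
  · exact Or.inr ⟨_, h1, fun m hm => (hgt m hm).symm⟩

theorem exists_sorted {n : ℕ} (s : Finset (Fin n →₀ ℕ)) :
    ∃ L : List (Fin n →₀ ℕ), L.Pairwise (fun d e => lexLt e d) ∧ ∀ d, d ∈ L ↔ d ∈ s := by
  classical
  let r : (Fin n →₀ ℕ) → (Fin n →₀ ℕ) → Prop := fun d e => d = e ∨ lexLt e d
  haveI : IsTrans _ r := ⟨by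
    rintro a b c (rfl | h1) (rfl | h2)
    · exact Or.inl rfl
    · exact Or.inr h2
    · exact Or.inr h1
    · exact Or.inr (lexLt_trans' h2 h1)⟩
  haveI : Std.Antisymm r := ⟨by
    rintro a b (rfl | h1) (h | h2)
    · rfl
    · rfl
    · exact h.symm
    · exact absurd (lexLt_trans' h1 h2) (lexLt_irrefl' _)⟩
  haveI : Std.Total r := ⟨by
    intro a b
    by_cases h : a = b
    · exact Or.inl (Or.inl h)
    · rcases lexLt_total' a b h with h | h
      · exact Or.inr (Or.inr h)
      · exact Or.inl (Or.inr h)⟩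
  refine ⟨s.sort r, ?_, fun d => Finset.mem_sort r⟩
  have h1 : (s.sort r).Pairwise r := Finset.pairwise_sort s r
  have h2 : (s.sort r).Nodup := Finset.sort_nodup s r
  refine (h1.and h2).imp ?_
  rintro a b ⟨h | h, h'⟩
  · exact absurd h h'
  · exact h

theorem linQuot_of_exchange (K : Type*) [Field K] {n : ℕ} (L : List (Fin n →₀ ℕ))
    (hL : L.Pairwise (fun d e => lexLt e d))
    (hex : ∀ u ∈ L, ∀ v ∈ L, lexLt v u →
      ∃ w ∈ L, ∃ p, lexLt v w ∧ w ≤ v + Finsupp.single p 1 ∧ v p < u p) :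
    IsLinQuotOrder K L := by
  classical
  intro i _
  have hidx : ∀ w ∈ L, lexLt (L.get i) w → ∃ k : Fin L.length, k.val < i.val ∧ L.get k = w := by
    intro w hw hlt
    obtain ⟨k, rfl⟩ := List.mem_iff_get.mp hw
    refine ⟨k, ?_, rfl⟩
    by_contra hk
    rcases (not_lt.mp hk).lt_or_eq with h | h
    · have := List.pairwise_iff_get.mp hL i k h
      exact lexLt_irrefl' _ (lexLt_trans' hlt this)
    · have : i = k := Fin.ext h
      subst this
      exact lexLt_irrefl' _ hlt
  refine ⟨{p | ∃ k : Fin L.length, k.val < i.val ∧ L.get k ≤ L.get i + Finsupp.single p 1}, ?_⟩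
  have hset : {m : MvPolynomial (Fin n) K |
          ∃ k : Fin L.length, k.val < i.val ∧ m = monomial (L.get k) 1} =
      (fun s => monomial s (1 : K)) '' {d | ∃ k : Fin L.length, k.val < i.val ∧ L.get k = d} := by
    ext m
    constructor
    · rintro ⟨k, hk, rfl⟩
      exact ⟨_, ⟨k, hk, rfl⟩, rfl⟩
    · rintro ⟨_, ⟨k, hk, rfl⟩, rfl⟩
      exact ⟨k, hk, rfl⟩
  rw [hset]
  ext f
  rw [Submodule.mem_colon]
  have hcol : (∀ p ∈ (Ideal.span {monomial (L.get i) (1 : K)} : Ideal (MvPolynomial (Fin n) K)), 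
      f • p ∈ Ideal.span ((fun s => monomial s (1 : K)) ''
        {d | ∃ k : Fin L.length, k.val < i.val ∧ L.get k = d})) ↔
      f * monomial (L.get i) (1 : K) ∈ Ideal.span ((fun s => monomial s (1 : K)) ''
        {d | ∃ k : Fin L.length, k.val < i.val ∧ L.get k = d}) := by
    constructor
    · intro h
      exact h _ (Ideal.subset_span rfl)
    · intro h p hp
      obtain ⟨g, rfl⟩ := Ideal.mem_span_singleton'.mp hp
      have := Ideal.mul_mem_left _ g h
      rw [smul_eq_mul]
      convert this using 1
      ring
  refine Iff.trans hcol ?_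
  rw [mem_ideal_span_monomial_image, mem_ideal_span_X_image]
  constructor
  · intro h s hs
    have hs' : s + L.get i ∈ (f * monomial (L.get i) (1 : K)).support := by
      rw [mem_support_iff, coeff_mul_monomial, mul_one]
      exact mem_support_iff.mp hs
    obtain ⟨_, ⟨k, hk, rfl⟩, hle⟩ := h _ hs'
    have hlt := List.pairwise_iff_get.mp hL k i hk
    obtain ⟨w, hw, p, hvw, hwle, hp⟩ := hex _ (List.get_mem L k) _ (List.get_mem L i) hlt
    obtain ⟨k', hk', rfl⟩ := hidx w hw hvw
    refine ⟨p, ⟨k', hk', hwle⟩, ?_⟩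
    have := hle p
    simp only [Finsupp.add_apply] at this
    omega
  · intro h t ht
    rw [mem_support_iff, coeff_mul_monomial'] at ht
    have hle : L.get i ≤ t := by
      by_contra hc
      rw [if_neg hc] at ht
      exact ht rfl
    rw [if_pos hle, mul_one] at ht
    obtain ⟨p, ⟨k, hk, hkle⟩, hp⟩ := h _ (mem_support_iff.mpr ht)
    refine ⟨_, ⟨k, hk, rfl⟩, hkle.trans ?_⟩
    intro q
    have h1 := hle q
    rw [Finsupp.add_apply, Finsupp.single_apply]
    split_ifs with hpq
    · subst hpq
      rw [Finsupp.tsub_apply] at hp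
      omega
    · omega

theorem deg_sum {n : ℕ} (d : Fin n →₀ ℕ) : d.degree = ∑ i, d i := by
  rw [Finsupp.degree_eq_sum]

theorem exchange_good {n : ℕ} {v : Fin n →₀ ℕ} {j p : Fin n} (hj : 0 < v j) (hjp : j < p) :
    ∃ w : Fin n →₀ ℕ, w j + 1 = v j ∧ w p = v p + 1 ∧ (∀ a, a ≠ j → a ≠ p → w a = v a) ∧
      w.degree = v.degree ∧ lexLt v w ∧ w ≤ v + Finsupp.single p 1 := by
  have hle : Finsupp.single j 1 ≤ v := by
    rw [Finsupp.single_le_iff]; exact hj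
  obtain ⟨t, rfl⟩ := exists_add_of_le hle
  have hne := hjp.ne
  refine ⟨t + Finsupp.single p 1, ?_, ?_, ?_, ?_, ⟨p, ?_, ?_⟩, ?_⟩
  · simp [Finsupp.single_apply, hne.symm]; omega
  · simp [Finsupp.single_apply, hne]
  · intro a h1 h2
    simp [Finsupp.single_apply, h1.symm, h2.symm]
  · simp [add_comm]
  · simp [Finsupp.single_apply, hne]
  · intro m hm
    simp [Finsupp.single_apply, hm.ne, (hjp.trans hm).ne]
  · gcongr
    exact le_add_self

theorem good_exchange {n : ℕ} (hn : 6 ≤ n) {u v : Fin n →₀ ℕ} (hu : Good n u) (hv : Good n v)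
    (h : lexLt v u) :
    ∃ w, Good n w ∧ ∃ p, lexLt v w ∧ w ≤ v + Finsupp.single p 1 ∧ v p < u p := by
  classical
  obtain ⟨k, hk, hk'⟩ := h
  have hd : ∑ i, u i = ∑ i, v i := by rw [← deg_sum, ← deg_sum, hu.deg, hv.deg]
  -- `k` is not the last vertex
  have hkn : k.val + 1 < n := by
    by_contra hc
    have hc' : k.val + 1 = n := by omega
    have := hu.top k hc'
    have := hv.top k hc'
    omega
  have hex : ∃ j, j < k ∧ 0 < v j := by
    by_contra hc
    push Not at hc
    have : ∑ i, v i < ∑ i, u i := by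
      apply Finset.sum_lt_sum
      · intro i _
        rcases lt_trichotomy i k with h | h | h
        · have := hc i h; omega
        · subst h; exact hk.le
        · exact (hk' i h).le
      · exact ⟨k, Finset.mem_univ _, hk⟩
    omega
  obtain ⟨z, hz⟩ : ∃ z : Fin n, z.val = 0 := ⟨⟨0, by omega⟩, rfl⟩
  obtain ⟨y, hy⟩ : ∃ y : Fin n, y.val + 3 = n := ⟨⟨n - 3, by omega⟩, by simp; omega⟩
  obtain ⟨x, hx⟩ : ∃ x : Fin n, x.val + 2 = n := ⟨⟨n - 2, by omega⟩, by simp; omega⟩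
  obtain ⟨t, ht⟩ : ∃ t : Fin n, t.val + 1 = n := ⟨⟨n - 1, by omega⟩, by simp; omega⟩
  have ut := hu.top t ht
  have vt := hv.top t ht
  have uyx := hu.two y x hy hx
  have vyx := hv.two y x hy hx
  have uzx := hu.wrap z x hz hx
  have vzx := hv.wrap z x hz hx
  -- main case: a suitable `j`
  have main : ∀ j, j < k → 0 < v j →
      (∀ a, a.val + 1 = k.val → a ≠ j → v a + v k ≤ 2) →
      (k = x → (y ≠ j → v y + v x ≤ 1) ∧ (z ≠ j → v z + v x ≤ 2)) →
      ∃ w, Good n w ∧ ∃ p, lexLt v w ∧ w ≤ v + Finsupp.single p 1 ∧ v p < u p := by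
    intro j hjk hj h1 h2
    obtain ⟨w, wj, wk, wo, wd, wl, wle⟩ := exchange_good hj hjk
    have wle' : ∀ a, a ≠ k → w a ≤ v a := by
      intro a ha
      by_cases haj : a = j
      · subst haj; omega
      · exact (wo a haj ha).le
    have wgt : ∀ a, k < a → w a = u a := by
      intro a ha
      rw [wo a (hjk.trans ha).ne' ha.ne', hk' a ha]
    refine ⟨w, ⟨by rw [wd, hv.deg], ?_, ?_, ?_, ?_⟩, k, wl, wle, hk⟩
    · intro a ha
      rw [wgt a (by rw [Fin.lt_def]; omega)]
      exact hu.top a ha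
    · intro a b ha hb
      obtain rfl : a = y := Fin.ext (by omega)
      obtain rfl : b = x := Fin.ext (by omega)
      have hab : a ≠ b := by intro h; subst h; omega
      by_cases hkx : k = b
      · have h3 := (h2 hkx).1
        subst hkx
        by_cases haj : a = j
        · subst haj; omega
        · have := h3 haj
          have := wle' a hab
          omega
      · by_cases hky : k = a
        · subst hky
          rw [wgt b (by rw [Fin.lt_def]; omega)]
          omega
        · have := wle' a (Ne.symm hky)
          have := wle' b (Ne.symm hkx)
          omega
    · intro a b hab hb
      have hvw := hv.win a b hab hb
      have huw := hu.win a b hab hb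
      have hab' : a ≠ b := by intro h; subst h; omega
      by_cases hkb : k = b
      · subst hkb
        by_cases haj : a = j
        · subst haj; omega
        · have := h1 a hab haj
          have := wle' a hab'
          omega
      · by_cases hka : k = a
        · subst hka
          rw [wgt b (by rw [Fin.lt_def]; omega)]
          omega
        · have := wle' a (Ne.symm hka)
          have := wle' b (Ne.symm hkb)
          omega
    · intro a b ha hb
      obtain rfl : a = z := Fin.ext (by omega)
      obtain rfl : b = x := Fin.ext (by omega)
      have hab : a ≠ b := by intro h; subst h; omega
      have haj : a ≠ k := by
        intro h; subst h
        rw [Fin.lt_def] at hjk; omega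
      by_cases hkx : k = b
      · have h3 := (h2 hkx).2
        subst hkx
        by_cases haj : a = j
        · subst haj; omega
        · have := h3 haj
          have := wle' a hab
          omega
      · have := wle' a haj
        have := wle' b (Ne.symm hkx)
        omega
  by_cases hkx : k = x
  · subst hkx
    by_cases hA : v y + v k = 2
    · by_cases hB : v z + v k = 3
      · -- both tight
        have hzy : z ≠ y := by intro h; subst h; omega
        have hzk : z ≠ k := by intro h; subst h; omega
        have hzt : z ≠ t := by intro h; subst h; omega
        have hyk : y ≠ k := by intro h; subst h; omega
        have hyt : y ≠ t := by intro h; subst h; omega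
        have hkt : k ≠ t := by intro h; subst h; omega
        have split : ∀ f : Fin n → ℕ, ∑ i, f i =
            (f z + (f y + (f k + f t))) + ∑ i ∈ ({z, y, k, t} : Finset (Fin n))ᶜ, f i := by
          intro f
          rw [← Finset.sum_add_sum_compl ({z, y, k, t} : Finset (Fin n)) f]
          congr 1
          rw [Finset.sum_insert (by simp [*]), Finset.sum_insert (by simp [*]),
            Finset.sum_insert (by simp [*]), Finset.sum_singleton]
        have hp : ∃ p ∈ ({z, y, k, t} : Finset (Fin n))ᶜ, v p < u p := by
          by_contra hc
          push Not at hc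
          have h1 := Finset.sum_le_sum hc
          have h2 := split u
          have h3 := split v
          omega
        obtain ⟨p, hp, hpu⟩ := hp
        simp only [Finset.mem_compl, Finset.mem_insert, Finset.mem_singleton, not_or] at hp
        obtain ⟨hpz, hpy, hpk, hpt⟩ := hp
        have hzp : z < p := by
          rw [Fin.lt_def]
          have : p.val ≠ z.val := fun h => hpz (Fin.ext h)
          omega
        have hpb : p.val + 4 ≤ n := by
          have : p.val ≠ y.val := fun h => hpy (Fin.ext h)
          have : p.val ≠ k.val := fun h => hpk (Fin.ext h)
          have : p.val ≠ t.val := fun h => hpt (Fin.ext h)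
          omega
        have five : ∀ a b : Fin n, a ≠ b → a ≠ z → a ≠ k → a ≠ t → b ≠ z → b ≠ k → b ≠ t →
            v a + v b ≤ 2 := by
          intro a b h1 h2 h3 h4 h5 h6 h7
          have : ∑ i ∈ ({a, b, z, k, t} : Finset (Fin n)), v i ≤ ∑ i, v i :=
            Finset.sum_le_sum_of_subset (Finset.subset_univ _)
          rw [Finset.sum_insert (by simp [*]), Finset.sum_insert (by simp [*]),
            Finset.sum_insert (by simp [*]), Finset.sum_insert (by simp [*]),
            Finset.sum_singleton, ← deg_sum, hv.deg] at this
          omega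
        obtain ⟨w, wj, wk, wo, wd, wl, wle⟩ := exchange_good (v := v) (j := z) (by omega) hzp
        have wle' : ∀ a, a ≠ p → w a ≤ v a := by
          intro a ha
          by_cases haj : a = z
          · subst haj; omega
          · exact (wo a haj ha).le
        refine ⟨w, ⟨by rw [wd, hv.deg], ?_, ?_, ?_, ?_⟩, p, wl, wle, hpu⟩
        · intro a ha
          obtain rfl : a = t := Fin.ext (by omega)
          rw [wo a hzt.symm (Ne.symm hpt), vt]
        · intro a b ha hb
          obtain rfl : a = y := Fin.ext (by omega)
          obtain rfl : b = k := Fin.ext (by omega)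
          have := wle' a (Ne.symm hpy)
          have := wle' b (Ne.symm hpk)
          omega
        · intro a b hab hb
          have hvw := hv.win a b hab hb
          have hab' : a ≠ b := by intro h; subst h; omega
          by_cases hpb' : p = b
          · subst hpb'
            by_cases haz : a = z
            · subst haz; omega
            · have := wle' a hab'
              have := five a p hab' haz (by intro h; subst h; omega) (by intro h; subst h; omega)
                hpz hpk hpt
              omega
          · by_cases hpa : p = a
            · subst hpa
              have := wle' b hab'.symm
              have := five p b hab' hpz hpk hpt (by intro h; subst h; omega)
                (by intro h; subst h; omega) (by intro h; subst h; omega)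
              omega
            · have := wle' a (Ne.symm hpa)
              have := wle' b (Ne.symm hpb')
              omega
        · intro a b ha hb
          obtain rfl : a = z := Fin.ext (by omega)
          obtain rfl : b = k := Fin.ext (by omega)
          have := wle' a (Ne.symm hpz)
          have := wle' b (Ne.symm hpk)
          omega
      · refine main y (by rw [Fin.lt_def]; omega) (by omega) ?_ ?_
        · intro a ha hay
          exact absurd (Fin.ext (by omega)) hay
        · intro _
          exact ⟨fun h => absurd rfl h, fun _ => by omega⟩
    · have hA' : v y + v k ≤ 1 := by omega
      by_cases hB : v z + v k = 3
      · refine main z (by rw [Fin.lt_def]; omega) (by omega) ?_ ?_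
        · intro a ha _
          obtain rfl : a = y := Fin.ext (by omega)
          omega
        · intro _
          exact ⟨fun _ => hA', fun h => absurd rfl h⟩
      · obtain ⟨j, hj, hj0⟩ := hex
        refine main j hj hj0 ?_ ?_
        · intro a ha _
          obtain rfl : a = y := Fin.ext (by omega)
          omega
        · intro _
          exact ⟨fun _ => hA', fun _ => by omega⟩
  · obtain ⟨j, hj, hj0⟩ := hex
    have hk0 : 0 < k.val := by rw [Fin.lt_def] at hj; omega
    obtain ⟨q, hq⟩ : ∃ q : Fin n, q.val + 1 = k.val := ⟨⟨k.val - 1, by omega⟩, by simp; omega⟩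
    have vqk := hv.win q k hq hkn
    by_cases hA : v q + v k = 3
    · have hkk : u k ≤ 3 := by
        have := hu.win q k hq hkn
        omega
      refine main q (by rw [Fin.lt_def]; omega) (by omega) ?_ (fun h => absurd h hkx)
      intro a ha haq
      exact absurd (Fin.ext (by omega)) haq
    · refine main j hj hj0 ?_ (fun h => absurd h hkx)
      intro a ha _
      obtain rfl : a = q := Fin.ext (by omega)
      omega

/-- exponent vectors of the edges -/
def edgeExp {n : ℕ} (G : SimpleGraph (Fin n)) : Set (Fin n →₀ ℕ) :=
  {e | ∃ i j, G.Adj i j ∧ e = Finsupp.single i 1 + Finsupp.single j 1}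

def genExp (n : ℕ) : Set (Fin n →₀ ℕ) :=
  {d | ∃ a ∈ edgeExp (anticycleIn n (n - 1)), ∃ b ∈ edgeExp (anticycleIn n (n - 1)),
    ∃ c ∈ edgeExp (starF n), d = a + b + c}

theorem edgeIdeal_eq (K : Type*) [Field K] {n : ℕ} (G : SimpleGraph (Fin n)) :
    edgeIdeal K G = Ideal.span ((fun s => monomial s (1 : K)) '' edgeExp G) := by
  unfold edgeIdeal
  congr 1
  ext p
  constructor
  · rintro ⟨i, j, h, rfl⟩
    exact ⟨_, ⟨i, j, h, rfl⟩, by simp [X, monomial_mul]⟩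
  · rintro ⟨_, ⟨i, j, h, rfl⟩, rfl⟩
    exact ⟨i, j, h, by simp [X, monomial_mul]⟩

theorem prod_eq (K : Type*) [Field K] (n : ℕ) :
    edgeIdeal K (anticycleIn n (n - 1)) ^ 2 * edgeIdeal K (starF n) =
      Ideal.span ((fun s => monomial s (1 : K)) '' genExp n) := by
  rw [edgeIdeal_eq, edgeIdeal_eq, pow_two, Ideal.span_mul_span', Ideal.span_mul_span']
  congr 1
  ext p
  simp only [Set.mem_mul]
  constructor
  · rintro ⟨_, ⟨_, ⟨a, ha, rfl⟩, _, ⟨b, hb, rfl⟩, rfl⟩, _, ⟨c, hc, rfl⟩, rfl⟩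
    exact ⟨_, ⟨a, ha, b, hb, c, hc, rfl⟩, by simp [monomial_mul]⟩
  · rintro ⟨_, ⟨a, ha, b, hb, c, hc, rfl⟩, rfl⟩
    exact ⟨_, ⟨_, ⟨a, ha, rfl⟩, _, ⟨b, hb, rfl⟩, rfl⟩, _, ⟨c, hc, rfl⟩, by simp [monomial_mul]⟩

theorem single_add_le {n : ℕ} (i j a b : Fin n) (hij : i ≠ j) (hab : a ≠ b)
    (h1 : ¬ (i = a ∧ j = b)) (h2 : ¬ (i = b ∧ j = a)) :
    (Finsupp.single i 1 + Finsupp.single j 1 : Fin n →₀ ℕ) a +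
      (Finsupp.single i 1 + Finsupp.single j 1 : Fin n →₀ ℕ) b ≤ 1 := by
  simp only [Finsupp.add_apply, Finsupp.single_apply]
  split_ifs <;> grind

theorem anti_adj_iff {n : ℕ} (hn : 6 ≤ n) (i j : Fin n) (hij : i.val ≤ j.val) :
    (anticycleIn n (n - 1)).Adj i j ↔
      i.val + 2 ≤ j.val ∧ j.val + 2 ≤ n ∧ ¬ (i.val = 0 ∧ j.val + 2 = n) := by
  change (i ≠ j ∧ i.val < n - 1 ∧ j.val < n - 1 ∧ (i.val + 1) % (n - 1) ≠ j.val ∧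
    (j.val + 1) % (n - 1) ≠ i.val) ↔ _
  rw [Ne, Fin.ext_iff]
  by_cases hj : j.val + 2 = n
  · have e : (j.val + 1) % (n - 1) = 0 := by
      have : j.val + 1 = n - 1 := by omega
      rw [this, Nat.mod_self]
    rw [e]
    by_cases hi : i.val + 2 = n
    · omega
    · by_cases hi' : i.val + 1 < n - 1
      · rw [Nat.mod_eq_of_lt hi']; omega
      · omega
  · by_cases hj' : j.val + 1 < n - 1
    · rw [Nat.mod_eq_of_lt hj', Nat.mod_eq_of_lt (by omega)]; omega
    · omega

theorem anti_facts {n : ℕ} (hn : 6 ≤ n) {e : Fin n →₀ ℕ}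
    (he : e ∈ edgeExp (anticycleIn n (n - 1))) :
    e.degree = 2 ∧ (∀ a : Fin n, a.val + 1 = n → e a = 0) ∧
    (∀ a b : Fin n, a.val + 1 = b.val → e a + e b ≤ 1) ∧
    (∀ a b : Fin n, a.val = 0 → b.val + 2 = n → e a + e b ≤ 1) := by
  obtain ⟨i, j, h, rfl⟩ := he
  wlog hij : i.val ≤ j.val generalizing i j
  · rw [add_comm]
    exact this j i h.symm (by omega)
  have hne := h.ne
  rw [anti_adj_iff hn i j hij] at h
  refine ⟨by simp, ?_, ?_, ?_⟩
  · intro a ha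
    have h1 : i ≠ a := by rintro rfl; omega
    have h2 : j ≠ a := by rintro rfl; omega
    simp [Finsupp.single_apply, h1, h2]
  · intro a b hab
    apply single_add_le _ _ _ _ hne
    · rintro rfl; omega
    · rintro ⟨rfl, rfl⟩; omega
    · rintro ⟨rfl, rfl⟩; omega
  · intro a b ha hb
    apply single_add_le _ _ _ _ hne
    · rintro rfl; omega
    · rintro ⟨rfl, rfl⟩; omega
    · rintro ⟨rfl, rfl⟩; omega

theorem star_exp {n : ℕ} (hn : 6 ≤ n) {e : Fin n →₀ ℕ} :
    e ∈ edgeExp (starF n) ↔ ∃ p t : Fin n, p.val + 4 ≤ n ∧ t.val + 1 = n ∧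
      e = Finsupp.single p 1 + Finsupp.single t 1 := by
  constructor
  · rintro ⟨i, j, h, rfl⟩
    rw [starF, SimpleGraph.fromRel_adj] at h
    rcases h with ⟨-, h | h⟩
    · exact ⟨i, j, h.1, by omega, rfl⟩
    · exact ⟨j, i, h.1, by omega, add_comm _ _⟩
  · rintro ⟨p, t, hp, ht, rfl⟩
    refine ⟨p, t, ?_, rfl⟩
    rw [starF, SimpleGraph.fromRel_adj]
    exact ⟨by rintro rfl; omega, Or.inl ⟨hp, by omega⟩⟩

theorem star_facts {n : ℕ} (hn : 6 ≤ n) {e : Fin n →₀ ℕ} (he : e ∈ edgeExp (starF n)) :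
    e.degree = 2 ∧ (∀ a : Fin n, a.val + 1 = n → e a = 1) ∧
    (∀ a : Fin n, n ≤ a.val + 3 → a.val + 1 < n → e a = 0) ∧
    (∀ a b : Fin n, a ≠ b → a.val + 1 < n → b.val + 1 < n → e a + e b ≤ 1) := by
  obtain ⟨p, t, hp, ht, rfl⟩ := (star_exp hn).mp he
  refine ⟨by simp, ?_, ?_, ?_⟩
  · intro a ha
    obtain rfl : a = t := Fin.ext (by omega)
    have h1 : p ≠ a := by rintro rfl; omega
    simp [Finsupp.single_apply, h1]
  · intro a ha ha'
    have h1 : p ≠ a := by rintro rfl; omega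
    have h2 : t ≠ a := by rintro rfl; omega
    simp [Finsupp.single_apply, h1, h2]
  · intro a b hab ha hb
    apply single_add_le _ _ _ _ _ hab
    · rintro ⟨rfl, rfl⟩; omega
    · rintro ⟨rfl, rfl⟩; omega
    · rintro rfl; omega

theorem good_of_gen {n : ℕ} (hn : 6 ≤ n) {d : Fin n →₀ ℕ} (hd : d ∈ genExp n) : Good n d := by
  obtain ⟨a, ha, b, hb, c, hc, rfl⟩ := hd
  obtain ⟨a1, a2, a3, a4⟩ := anti_facts hn ha
  obtain ⟨b1, b2, b3, b4⟩ := anti_facts hn hb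
  obtain ⟨c1, c2, c3, c4⟩ := star_facts hn hc
  refine ⟨by simp [a1, b1, c1], ?_, ?_, ?_, ?_⟩
  · intro x hx
    simp [a2 x hx, b2 x hx, c2 x hx]
  · intro x y hx hy
    have := a3 x y (by omega)
    have := b3 x y (by omega)
    have := c3 x (by omega) (by omega)
    have := c3 y (by omega) (by omega)
    simp only [Finsupp.add_apply]
    omega
  · intro x y hx hy
    have := a3 x y (by omega)
    have := b3 x y (by omega)
    have := c4 x y (by rintro rfl; omega) (by omega) (by omega)
    simp only [Finsupp.add_apply]
    omega
  · intro x y hx hy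
    have := a4 x y (by omega) (by omega)
    have := b4 x y (by omega) (by omega)
    have := c4 x y (by rintro rfl; omega) (by omega) (by omega)
    simp only [Finsupp.add_apply]
    omega

theorem exists_five {n : ℕ} (d : Fin n →₀ ℕ) (hd : d.degree = 5) :
    ∃ a b c e f : Fin n, a ≤ b ∧ b ≤ c ∧ c ≤ e ∧ e ≤ f ∧
      d = Finsupp.single a 1 + Finsupp.single b 1 + Finsupp.single c 1 + Finsupp.single e 1 +
        Finsupp.single f 1 := by
  classical
  let l := (Finsupp.toMultiset d).sort (· ≤ ·)
  have hl : (l : Multiset (Fin n)) = Finsupp.toMultiset d := Multiset.sort_eq _ _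
  have hs : l.Pairwise (· ≤ ·) := Multiset.pairwise_sort _ _
  have hlen : l.length = 5 := by
    have : Multiset.card (l : Multiset (Fin n)) = 5 := by
      rw [hl, Finsupp.card_toMultiset, ← hd, deg_sum, Finsupp.sum_fintype]
      · simp
      · simp
    simpa using this
  have hd' : d = Multiset.toFinsupp (l : Multiset (Fin n)) := by
    rw [hl, Finsupp.toMultiset_toFinsupp]
  clear_value l
  match l, hlen with
  | [a, b, c, e, f], _ =>
    simp only [List.pairwise_cons, List.mem_cons] at hs
    refine ⟨a, b, c, e, f, hs.1 b (by simp), hs.2.1 c (by simp), hs.2.2.1 e (by simp),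
      hs.2.2.2.1 f (by simp), ?_⟩
    rw [hd']
    have : (([a, b, c, e, f] : List (Fin n)) : Multiset (Fin n)) = {a} + {b} + {c} + {e} + {f} := by
      rfl
    rw [this]
    simp only [map_add, Multiset.toFinsupp_singleton]

theorem hit {n : ℕ} (x a b : Fin n) (h : x.val = a.val ∨ x.val = b.val) :
    1 ≤ (Finsupp.single x 1 : Fin n →₀ ℕ) a + (Finsupp.single x 1 : Fin n →₀ ℕ) b := by
  rcases h with h | h
  · obtain rfl := Fin.ext h
    simp
  · obtain rfl := Fin.ext h
    simp

theorem gen_of_good {n : ℕ} (hn : 6 ≤ n) {d : Fin n →₀ ℕ} (hd : Good n d) : d ∈ genExp n := by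
  classical
  obtain ⟨y, hy⟩ : ∃ y : Fin n, y.val + 3 = n := ⟨⟨n - 3, by omega⟩, by simp; omega⟩
  obtain ⟨x, hx⟩ : ∃ x : Fin n, x.val + 2 = n := ⟨⟨n - 2, by omega⟩, by simp; omega⟩
  obtain ⟨t, ht⟩ : ∃ t : Fin n, t.val + 1 = n := ⟨⟨n - 1, by omega⟩, by simp; omega⟩
  obtain ⟨z, hz⟩ : ∃ z : Fin n, z.val = 0 := ⟨⟨0, by omega⟩, rfl⟩
  have hle : Finsupp.single t 1 ≤ d := by
    rw [Finsupp.single_le_iff, hd.top t ht]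
  obtain ⟨g, rfl⟩ := exists_add_of_le hle
  have hg5 : g.degree = 5 := by
    have := hd.deg
    rw [map_add, Finsupp.degree_single] at this
    omega
  have hgt : g t = 0 := by
    have := hd.top t ht
    simp at this
    exact this
  have hg : ∀ a b : Fin n, g a + g b ≤
      (Finsupp.single t 1 + g : Fin n →₀ ℕ) a + (Finsupp.single t 1 + g : Fin n →₀ ℕ) b := by
    intro a b
    simp only [Finsupp.add_apply]
    omega
  have htwo := (hg y x).trans (hd.two y x hy hx)
  have hwrap := (hg z x).trans (hd.wrap z x hz hx)
  have hwin := fun a b h1 h2 => (hg a b).trans (hd.win a b h1 h2)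
  obtain ⟨v1, v2, v3, v4, v5, h12, h23, h34, h45, rfl⟩ := exists_five g hg5
  rw [Fin.le_def] at h12 h23 h34 h45
  simp only [Finsupp.add_apply] at htwo hwrap hwin hgt
  have h5 : v5.val + 2 ≤ n := by
    have : v5 ≠ t := by
      rintro rfl
      simp at hgt
    have : v5.val ≠ t.val := fun h => this (Fin.ext h)
    omega
  have f3 : v3.val + 4 ≤ n := by
    by_contra hc
    have := hit v3 y x (by omega)
    have := hit v4 y x (by omega)
    have := hit v5 y x (by omega)
    omega
  have f14 : v1.val + 2 ≤ v4.val := by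
    by_contra hc
    obtain ⟨q, hq⟩ : ∃ q : Fin n, q.val = v1.val + 1 := ⟨⟨v1.val + 1, by omega⟩, rfl⟩
    have := hwin v1 q (by omega) (by omega)
    have := hit v1 v1 q (by omega)
    have := hit v2 v1 q (by omega)
    have := hit v3 v1 q (by omega)
    have := hit v4 v1 q (by omega)
    omega
  have f25 : v2.val + 2 ≤ v5.val := by
    by_contra hc
    obtain ⟨q, hq⟩ : ∃ q : Fin n, q.val = v2.val + 1 := ⟨⟨v2.val + 1, by omega⟩, rfl⟩
    have := hwin v2 q (by omega) (by omega)
    have := hit v2 v2 q (by omega)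
    have := hit v3 v2 q (by omega)
    have := hit v4 v2 q (by omega)
    have := hit v5 v2 q (by omega)
    omega
  have f24 : ¬ (v2.val = 0 ∧ v4.val + 2 = n) := by
    intro hc
    have := hit v1 z x (by omega)
    have := hit v2 z x (by omega)
    have := hit v4 z x (by omega)
    have := hit v5 z x (by omega)
    omega
  have f35 : ¬ (v3.val = 0 ∧ v5.val + 2 = n) := by
    intro hc
    have := hit v1 z x (by omega)
    have := hit v2 z x (by omega)
    have := hit v3 z x (by omega)
    have := hit v5 z x (by omega)
    omega
  by_cases hcase : (v1.val = 0 ∧ v4.val + 2 = n) ∨ (v2.val = 0 ∧ v5.val + 2 = n)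
  · refine ⟨_, ⟨v2, v4, ?_, rfl⟩, _, ⟨v3, v5, ?_, rfl⟩, _,
      (star_exp hn).mpr ⟨v1, t, by omega, ht, rfl⟩, by abel⟩
    · rw [anti_adj_iff hn _ _ (by omega)]; omega
    · rw [anti_adj_iff hn _ _ (by omega)]; omega
  · refine ⟨_, ⟨v1, v4, ?_, rfl⟩, _, ⟨v2, v5, ?_, rfl⟩, _,
      (star_exp hn).mpr ⟨v3, t, by omega, ht, rfl⟩, by abel⟩
    · rw [anti_adj_iff hn _ _ (by omega)]; omega
    · rw [anti_adj_iff hn _ _ (by omega)]; omega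

theorem isMinGen_iff (K : Type*) [Field K] {n : ℕ} (hn : 6 ≤ n) (d : Fin n →₀ ℕ) :
    IsMinGen (edgeIdeal K (anticycleIn n (n - 1)) ^ 2 * edgeIdeal K (starF n)) d ↔ Good n d := by
  classical
  have hmem : ∀ e : Fin n →₀ ℕ, monomial e (1 : K) ∈
      edgeIdeal K (anticycleIn n (n - 1)) ^ 2 * edgeIdeal K (starF n) ↔
      ∃ g, Good n g ∧ g ≤ e := by
    intro e
    rw [prod_eq, mem_ideal_span_monomial_image]
    constructor
    · intro h
      obtain ⟨g, hg, hle⟩ := h e (by simp)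
      exact ⟨g, good_of_gen hn hg, hle⟩
    · rintro ⟨g, hg, hle⟩ x hx
      have : x = e := by
        by_contra hne
        rw [mem_support_iff, coeff_monomial, if_neg (Ne.symm hne)] at hx
        exact hx rfl
      subst this
      exact ⟨g, gen_of_good hn hg, hle⟩
  constructor
  · rintro ⟨h1, h2⟩
    obtain ⟨g, hg, hle⟩ := (hmem d).mp h1
    by_cases h : g = d
    · exact h ▸ hg
    · exact absurd ((hmem g).mpr ⟨g, hg, le_rfl⟩) (h2 g hle h)
  · intro hd
    refine ⟨(hmem d).mpr ⟨d, hd, le_rfl⟩, ?_⟩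
    intro e hle hne hm
    obtain ⟨g, hg, hge⟩ := (hmem e).mp hm
    obtain ⟨r, rfl⟩ := exists_add_of_le (hge.trans hle)
    have h1 := hd.deg
    rw [map_add, hg.deg] at h1
    have h2 : r = 0 := (Finsupp.degree_eq_zero_iff r).mp (by omega)
    subst h2
    exact hne (le_antisymm hle (by simpa using hge))

theorem good_finite (n : ℕ) : {d | Good n d}.Finite := by
  apply (Set.finite_Iic (Finsupp.equivFunOnFinite.symm (fun _ : Fin n => 6))).subset
  intro d hd
  rw [Set.mem_Iic]
  intro i
  have h : d i ≤ ∑ j, d j := Finset.single_le_sum (f := fun j => d j) (fun _ _ => Nat.zero_le _)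
    (Finset.mem_univ i)
  rw [← deg_sum, hd.deg] at h
  simpa using h

/-- Lemma `lem3`: for `n ≥ 6`, `G = A_{n-1}` the anticycle on `[n-1]` and `F` the star
on `[n]` with edges `{i, n}`, `1 ≤ i ≤ n-3`, the product `I_G^2 · I_F` has linear
quotients via the ordering of its minimal generators in decreasing lexicographic order
induced by `x_n > x_{n-1} > … > x_1`. -/
theorem IG2IF_lex_linear_quotients
    (K : Type*) [Field K] (n : ℕ) (hn : 6 ≤ n) :
    ∃ L : List (Fin n →₀ ℕ),
      LexDecMinGenOrder (edgeIdeal K (anticycleIn n (n - 1)) ^ 2 * edgeIdeal K (starF n)) L ∧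
      IsLinQuotOrder K L := by
  obtain ⟨L, hL, hmem⟩ := exists_sorted (good_finite n).toFinset
  have hmem' : ∀ d, d ∈ L ↔ Good n d := by
    intro d
    rw [hmem, Set.Finite.mem_toFinset, Set.mem_setOf_eq]
  refine ⟨L, ⟨hL, fun d => by rw [hmem', isMinGen_iff K hn]⟩, ?_⟩
  apply linQuot_of_exchange K L hL
  intro u hu v hv h
  obtain ⟨w, hw, p, h1⟩ := good_exchange hn ((hmem' u).mp hu) ((hmem' v).mp hv) h
  exact ⟨w, (hmem' w).mpr hw, p, h1⟩
end
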